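/- Let S = {s_1,…,s_K} be a protocol sequence set, let γ satisfy 1 ≤ γ < K, and let M satisfy 2 ≤ M < K. Set A = {1,…,M} and B = {M+1,…,K}. Suppose S is TI with MPR capability γ and every subfamily of S consisting of M−1 sequences is SI (i.e., for every T ⊆ {1,…,K} with |T| = M−1 and every nonempty A′ ⊆ T, H((τ_j)_{j∈A′}; A′) is independent of the shifts). Then for any two systems of shifts τ = (τ_1,…,τ_M), τ′ = (τ′_1,…,τ′_M) on A and any fixed shifts τ* = (τ*_{M+1},…,τ*_K) on B, δ_M(τ→τ′; A) · Σ_{i=1}^{M−1} (−1)^{M−i} · binom(M−2, i−1) · θ_{γ−i}(τ*; B) = 0, where θ_{γ−i}(τ*; B) is understood to be 0 whenever γ − i < 0 or γ − i > K − M. -/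

import Mathlib

open Finset

/-- Generalized Hamming cross-correlation of the sequences indexed by `A`
(only the shifts `τ j` with `j ∈ A` matter). -/
def Hcorr {K L : ℕ} [NeZero L] (s : Fin K → ZMod L → ℕ)
    (A : Finset (Fin K)) (τ : Fin K → ZMod L) : ℕ :=
  ∑ t : ZMod L, ∏ j ∈ A, s j (t + τ j)

/-- The family `s` is shift-invariant (SI): every generalized Hamming
cross-correlation is independent of the relative shifts. -/
def IsSI {K L : ℕ} [NeZero L] (s : Fin K → ZMod L → ℕ) : Prop :=
  ∀ A : Finset (Fin K), A.Nonempty →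
    ∀ τ τ' : Fin K → ZMod L, Hcorr s A τ = Hcorr s A τ'

/-- Number of slots `t` in one period where user `i` transmits and at most
`γ - 1` other users transmit. -/
def Rcount {K L : ℕ} [NeZero L] (s : Fin K → ZMod L → ℕ) (γ : ℕ)
    (i : Fin K) (τ : Fin K → ZMod L) : ℕ :=
  (Finset.univ.filter (fun t : ZMod L =>
    s i (t + τ i) = 1 ∧ ∑ j ∈ Finset.univ.erase i, s j (t + τ j) ≤ γ - 1)).card

/-- Throughput of user `i` under MPR capability `γ` at shifts `τ`. -/
def R {K L : ℕ} [NeZero L] (s : Fin K → ZMod L → ℕ) (γ : ℕ)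
    (i : Fin K) (τ : Fin K → ZMod L) : ℚ :=
  (Rcount s γ i τ : ℚ) / L

/-- The family `s` is throughput-invariant (TI) with MPR capability `γ`. -/
def IsTI {K L : ℕ} [NeZero L] (s : Fin K → ZMod L → ℕ) (γ : ℕ) : Prop :=
  ∀ i : Fin K, ∀ τ τ' : Fin K → ZMod L, R s γ i τ = R s γ i τ'

/-- Duty factor of a single sequence. -/
def duty {L : ℕ} [NeZero L] (s : ZMod L → ℕ) : ℚ :=
  (∑ t : ZMod L, (s t : ℚ)) / L

/-- `thetaZ s A m τ` counts the `t ∈ ZMod L` such that exactly `m` of the values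
`s j (t + τ j)`, `j ∈ A`, equal `1` (zero when `m < 0` or `m > |A|`). -/
def thetaZ {K L : ℕ} [NeZero L] (s : Fin K → ZMod L → ℕ)
    (A : Finset (Fin K)) (m : ℤ) (τ : Fin K → ZMod L) : ℕ :=
  (Finset.univ.filter (fun t : ZMod L =>
    ((A.filter (fun j => s j (t + τ j) = 1)).card : ℤ) = m)).card

/-!
Shift the users outside `A` by a common amount `c` and sum the throughput of a user `i ∈ A` over
all `c`: the outer users then enter only through the distribution of their number of simultaneous
transmissions, so the sum has the form `∑ t, [i ∈ S t] * F #(S t)`, where `S t ⊆ A` is the set of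
users transmitting at time `t` and `F k` counts the slots in which at most `γ - k` outer users
transmit. By Möbius inversion on subsets, `∑ t, G (S t)` is a combination of the cross-correlations
of the subsets of `A`. When all of these but that of `A` itself are shift-invariant, a change of
shifts alters the sum by the change of `H(A) = θ_M(A)` times the top Möbius coefficient of `G`,
which here is the iterated difference `Δ^(M-1) F 1`. Since `Δ F k = -θ_{γ-k}`, this is the sum in
the theorem.
-/

section MoebiusTransform

variable {α β : Type*} [DecidableEq α] [AddCommGroup β]

/-- The Möbius transform of a set function `f`, i.e. the coefficients expressing `f A` as a sum over
the subsets of `A`. The sign is written with `#(A \ U)` rather than `#A - #U` to avoid truncated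
subtraction. -/
def moebiusTransform (f : Finset α → β) (A : Finset α) : β :=
  ∑ U ∈ A.powerset, (-1 : ℤ) ^ #(A \ U) • f U

lemma moebiusTransform_congr {f g : Finset α → β} {A : Finset α} (h : ∀ U ⊆ A, f U = g U) :
    moebiusTransform f A = moebiusTransform g A :=
  sum_congr rfl fun U hU => by rw [h U (mem_powerset.1 hU)]

lemma moebiusTransform_insert {a : α} {A : Finset α} (ha : a ∉ A) (f : Finset α → β) :
    moebiusTransform f (insert a A) =
      moebiusTransform (fun U => f (insert a U)) A - moebiusTransform f A := by
  have card_insert_sdiff : ∀ U ∈ A.powerset, #(insert a A \ U) = #(A \ U) + 1 := fun U hU => by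
    rw [insert_sdiff_of_notMem _ fun h => ha (mem_powerset.1 hU h),
      card_insert_of_notMem fun h => ha (mem_sdiff.1 h).1]
  have insert_sdiff_insert : ∀ U, insert a A \ insert a U = A \ U := fun U => by grind
  have sum_without_a : ∑ U ∈ A.powerset, (-1 : ℤ) ^ #(insert a A \ U) • f U =
      -moebiusTransform f A := by
    rw [moebiusTransform, ← sum_neg_distrib]
    refine sum_congr rfl fun U hU => ?_
    rw [card_insert_sdiff U hU, pow_succ, mul_neg_one, neg_smul]
  rw [moebiusTransform, sum_powerset_insert ha, sum_without_a]
  simp only [insert_sdiff_insert, moebiusTransform]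
  abel

theorem sum_powerset_moebiusTransform (f : Finset α → β) (A : Finset α) :
    ∑ U ∈ A.powerset, moebiusTransform f U = f A := by
  induction A using Finset.induction_on generalizing f with
  | empty => simp [moebiusTransform]
  | insert a A ha ih =>
    have split : ∀ U ∈ A.powerset, moebiusTransform f (insert a U) =
        moebiusTransform (fun V => f (insert a V)) U - moebiusTransform f U := fun U hU =>
      moebiusTransform_insert (fun h => ha (mem_powerset.1 hU h)) f
    rw [sum_powerset_insert ha, sum_congr rfl split, sum_sub_distrib, add_sub_cancel, ih]

lemma moebiusTransform_comp_card (F : ℕ → β) (A : Finset α) :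
    moebiusTransform (fun U => F #U) A = (fwdDiff 1)^[#A] F 0 := by
  have card_compl : ∀ U ∈ A.powerset, (-1 : ℤ) ^ #(A \ U) • F #U = (-1 : ℤ) ^ (#A - #U) • F #U :=
    fun U hU => by rw [card_sdiff_of_subset (mem_powerset.1 hU)]
  rw [moebiusTransform, sum_congr rfl card_compl,
    sum_powerset_apply_card fun k => (-1 : ℤ) ^ (#A - k) • F k, fwdDiff_iter_eq_sum_shift]
  refine sum_congr rfl fun k _ => ?_
  rw [zero_add, smul_eq_mul, mul_one, mul_comm, mul_smul, natCast_zsmul]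

lemma moebiusTransform_ite_mem_card {a : α} {A : Finset α} (ha : a ∈ A) (F : ℕ → β) :
    moebiusTransform (fun U => if a ∈ U then F #U else 0) A = (fwdDiff 1)^[#A - 1] F 1 := by
  have with_a : moebiusTransform
      (fun U => if a ∈ insert a U then F #(insert a U) else 0) (A.erase a) =
        moebiusTransform (fun U => F (#U + 1)) (A.erase a) :=
    moebiusTransform_congr fun U hU => by
      rw [if_pos (mem_insert_self a U),
        card_insert_of_notMem fun h => notMem_erase a A (hU h)]
  have without_a : moebiusTransform (fun U => if a ∈ U then F #U else 0) (A.erase a) =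
      moebiusTransform (fun _ => 0) (A.erase a) :=
    moebiusTransform_congr fun U hU => if_neg fun h => notMem_erase a A (hU h)
  rw [← insert_erase ha, moebiusTransform_insert (notMem_erase a A), with_a, without_a,
    moebiusTransform_comp_card fun k => F (k + 1), fwdDiff_iter_comp_add, insert_erase ha,
    card_erase_of_mem ha]
  simp [moebiusTransform]

theorem sum_comp_eq_sum_powerset_card_smul {Ω : Type*} [Fintype Ω] {A : Finset α}
    {S : Ω → Finset α} (hS : ∀ t, S t ⊆ A) (f : Finset α → β) :
    ∑ t, f (S t) = ∑ T ∈ A.powerset, #{t | T ⊆ S t} • moebiusTransform f T := by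
  have powerset_eq_filter : ∀ t, (S t).powerset = {T ∈ A.powerset | T ⊆ S t} := fun t => by
    grind
  calc ∑ t, f (S t)
      = ∑ t, ∑ T ∈ A.powerset, if T ⊆ S t then moebiusTransform f T else 0 :=
        sum_congr rfl fun t _ => by
          rw [← sum_powerset_moebiusTransform f, powerset_eq_filter, sum_filter]
    _ = ∑ T ∈ A.powerset, #{t | T ⊆ S t} • moebiusTransform f T := by
        rw [sum_comm]
        exact sum_congr rfl fun T _ => by rw [← sum_filter, sum_const]

end MoebiusTransform

section ActiveSet

variable {K L : ℕ} {s : Fin K → ZMod L → ℕ} {A B : Finset (Fin K)} {i : Fin K}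

/-- The set of users in `A` that transmit at time `t` under the shifts `τ`. -/
def activeSet (s : Fin K → ZMod L → ℕ) (A : Finset (Fin K)) (τ : Fin K → ZMod L) (t : ZMod L) :
    Finset (Fin K) :=
  {j ∈ A | s j (t + τ j) = 1}

lemma activeSet_subset (τ : Fin K → ZMod L) (t : ZMod L) : activeSet s A τ t ⊆ A :=
  filter_subset _ _

lemma mem_activeSet {τ : Fin K → ZMod L} {t : ZMod L} :
    i ∈ activeSet s A τ t ↔ i ∈ A ∧ s i (t + τ i) = 1 :=
  mem_filter

lemma card_activeSet (hbin : ∀ i t, s i t = 0 ∨ s i t = 1) (τ : Fin K → ZMod L) (t : ZMod L) :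
    #(activeSet s A τ t) = ∑ j ∈ A, s j (t + τ j) := by
  rw [activeSet, card_filter]
  refine sum_congr rfl fun j _ => ?_
  rcases hbin j (t + τ j) with h | h <;> simp [h]

lemma activeSet_univ_piecewise (τ τs : Fin K → ZMod L) (c t : ZMod L) :
    activeSet s univ (A.piecewise τ fun j => τs j + c) t =
      activeSet s A τ t ∪ activeSet s Aᶜ τs (t + c) := by
  ext j
  by_cases hj : j ∈ A <;> simp [mem_activeSet, hj, add_assoc, add_comm c]

lemma prod_eq_ite_subset_activeSet (hbin : ∀ i t, s i t = 0 ∨ s i t = 1) {T : Finset (Fin K)}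
    (hT : T ⊆ A) (τ : Fin K → ZMod L) (t : ZMod L) :
    ∏ j ∈ T, s j (t + τ j) = if T ⊆ activeSet s A τ t then 1 else 0 := by
  have factor : ∀ j ∈ T, s j (t + τ j) = if j ∈ activeSet s A τ t then 1 else 0 := fun j hj => by
    rcases hbin j (t + τ j) with h | h <;> simp [mem_activeSet, hT hj, h]
  rw [prod_congr rfl factor, prod_boole]
  rfl

variable [NeZero L]

lemma hcorr_eq_card (hbin : ∀ i t, s i t = 0 ∨ s i t = 1) {T : Finset (Fin K)} (hT : T ⊆ A)
    (τ : Fin K → ZMod L) : Hcorr s T τ = #{t | T ⊆ activeSet s A τ t} := by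
  rw [Hcorr, card_filter]
  exact sum_congr rfl fun t _ => prod_eq_ite_subset_activeSet hbin hT τ t

lemma thetaZ_card_eq_hcorr (hbin : ∀ i t, s i t = 0 ∨ s i t = 1) (τ : Fin K → ZMod L) :
    thetaZ s A #A τ = Hcorr s A τ := by
  rw [hcorr_eq_card hbin Subset.rfl]
  refine congrArg card (filter_congr fun t _ => ?_)
  rw [Nat.cast_inj]
  exact ⟨fun h => (eq_of_subset_of_card_le (activeSet_subset τ t) h.ge).ge,
    fun h => congrArg card ((activeSet_subset τ t).antisymm h)⟩

theorem sum_comp_activeSet_sub (hbin : ∀ i t, s i t = 0 ∨ s i t = 1) {β : Type*} [AddCommGroup β]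
    (f : Finset (Fin K) → β) {τ τ' : Fin K → ZMod L}
    (hH : ∀ T ⊂ A, Hcorr s T τ = Hcorr s T τ') :
    ∑ t, f (activeSet s A τ' t) - ∑ t, f (activeSet s A τ t) =
      ((Hcorr s A τ' : ℤ) - Hcorr s A τ) • moebiusTransform f A := by
  have expand : ∀ ρ, ∑ t, f (activeSet s A ρ t) =
      ∑ T ∈ A.powerset, Hcorr s T ρ • moebiusTransform f T := fun ρ => by
    rw [sum_comp_eq_sum_powerset_card_smul (activeSet_subset ρ)]
    exact sum_congr rfl fun T hT => by rw [hcorr_eq_card hbin (mem_powerset.1 hT)]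
  rw [expand, expand, ← sum_sub_distrib, sum_eq_single_of_mem A (mem_powerset_self A), sub_smul,
    natCast_zsmul, natCast_zsmul]
  intro T hT hTA
  rw [hH T ((mem_powerset.1 hT).ssubset_of_ne hTA), sub_self]

/-- The number of slots in which at most `γ - k` users of `B` transmit; it is zero when `γ < k`. -/
def lightCount (s : Fin K → ZMod L → ℕ) (B : Finset (Fin K)) (γ : ℕ) (τ : Fin K → ZMod L)
    (k : ℕ) : ℕ :=
  #{t | k + #(activeSet s B τ t) ≤ γ}

lemma fwdDiff_lightCount (γ : ℕ) (τ : Fin K → ZMod L) (k : ℕ) :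
    fwdDiff 1 (fun k => (lightCount s B γ τ k : ℤ)) k = -(thetaZ s B ((γ : ℤ) - k) τ : ℤ) := by
  change (lightCount s B γ τ (k + 1) : ℤ) - lightCount s B γ τ k =
    -((#{t | (#(activeSet s B τ t) : ℤ) = γ - k} : ℕ) : ℤ)
  simp only [lightCount, card_filter, Nat.cast_sum]
  rw [← sum_sub_distrib, ← sum_neg_distrib]
  refine sum_congr rfl fun t _ => ?_
  push_cast
  split_ifs <;> omega

lemma fwdDiff_iter_lightCount {M : ℕ} (hM : 2 ≤ M) (γ : ℕ) (τ : Fin K → ZMod L) :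
    (fwdDiff 1)^[M - 1] (fun k => (lightCount s B γ τ k : ℤ)) 1 =
      ∑ k ∈ Icc 1 (M - 1), (-1) ^ (M - k) * (Nat.choose (M - 2) (k - 1) : ℤ) *
        (thetaZ s B ((γ : ℤ) - k) τ : ℤ) := by
  obtain ⟨n, rfl⟩ := Nat.exists_eq_add_of_le' hM
  rw [show n + 2 - 1 = n + 1 from rfl, Function.iterate_succ_apply, fwdDiff_iter_eq_sum_shift,
    ← Ico_add_one_right_eq_Icc, sum_Ico_eq_sum_range]
  refine sum_congr rfl fun k hk => ?_
  have hkn : k ≤ n := Nat.lt_succ_iff.1 (mem_range.1 hk)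
  rw [smul_eq_mul k, mul_one, fwdDiff_lightCount, Nat.add_sub_cancel, Nat.add_sub_cancel_left,
    show n + 2 - (1 + k) = n - k + 1 by omega, smul_eq_mul]
  ring

lemma rcount_eq_card (hbin : ∀ i t, s i t = 0 ∨ s i t = 1) {γ : ℕ} (hγ : 1 ≤ γ)
    (τ : Fin K → ZMod L) :
    Rcount s γ i τ = #{t | i ∈ activeSet s univ τ t ∧ #(activeSet s univ τ t) ≤ γ} := by
  refine congrArg card (filter_congr fun t _ => ?_)
  have herase := add_sum_erase univ (fun j => s j (t + τ j)) (mem_univ i)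
  simp only [mem_activeSet, mem_univ, true_and, card_activeSet hbin]
  exact and_congr_right fun hi => by omega

theorem sum_rcount_piecewise (hbin : ∀ i t, s i t = 0 ∨ s i t = 1) {γ : ℕ} (hγ : 1 ≤ γ)
    (hi : i ∈ A) (τ τs : Fin K → ZMod L) :
    ∑ c, Rcount s γ i (A.piecewise τ fun j => τs j + c) =
      ∑ t, if i ∈ activeSet s A τ t then lightCount s Aᶜ γ τs #(activeSet s A τ t) else 0 := by
  have mem_iff : ∀ c t, i ∈ activeSet s A τ t ∪ activeSet s Aᶜ τs (t + c) ↔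
      i ∈ activeSet s A τ t := fun c t => by
    simp [mem_activeSet, hi]
  have card_union : ∀ c t, #(activeSet s A τ t ∪ activeSet s Aᶜ τs (t + c)) =
      #(activeSet s A τ t) + #(activeSet s Aᶜ τs (t + c)) := fun c t =>
    card_union_of_disjoint <| disjoint_compl_right.mono (activeSet_subset τ t)
      (activeSet_subset τs (t + c))
  simp only [rcount_eq_card hbin hγ, activeSet_univ_piecewise, mem_iff, card_union, card_filter]
  rw [sum_comm]
  refine sum_congr rfl fun t _ => ?_
  split_ifs with hit
  · simp only [hit, true_and]
    rw [lightCount, card_filter]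
    exact Equiv.sum_comp (Equiv.addLeft t) fun u =>
      if #(activeSet s A τ t) + #(activeSet s Aᶜ τs u) ≤ γ then 1 else 0
  · simp only [hit, false_and, if_false, sum_const_zero]

lemma rcount_eq_of_r_eq {γ : ℕ} {ρ ρ' : Fin K → ZMod L} (h : R s γ i ρ = R s γ i ρ') :
    Rcount s γ i ρ = Rcount s γ i ρ' := by
  have hL : (L : ℚ) ≠ 0 := Nat.cast_ne_zero.2 (NeZero.ne L)
  exact Nat.cast_injective ((div_left_inj' hL).1 h)

theorem hcorr_sub_mul_fwdDiff_eq_zero (hbin : ∀ i t, s i t = 0 ∨ s i t = 1) {γ : ℕ} (hγ : 1 ≤ γ)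
    (hi : i ∈ A) (hTI : ∀ ρ ρ', R s γ i ρ = R s γ i ρ') {τ τ' : Fin K → ZMod L}
    (hH : ∀ T ⊂ A, Hcorr s T τ = Hcorr s T τ') (τs : Fin K → ZMod L) :
    ((Hcorr s A τ' : ℤ) - Hcorr s A τ) *
      (fwdDiff 1)^[#A - 1] (fun k => (lightCount s Aᶜ γ τs k : ℤ)) 1 = 0 := by
  have hsum : ∑ c, Rcount s γ i (A.piecewise τ' fun j => τs j + c) =
      ∑ c, Rcount s γ i (A.piecewise τ fun j => τs j + c) :=
    sum_congr rfl fun c _ => rcount_eq_of_r_eq (hTI _ _)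
  rw [sum_rcount_piecewise hbin hγ hi, sum_rcount_piecewise hbin hγ hi] at hsum
  rw [← moebiusTransform_ite_mem_card hi, ← smul_eq_mul, ← sum_comp_activeSet_sub hbin _ hH,
    sub_eq_zero]
  exact_mod_cast hsum

lemma hcorr_eq_of_ssubset {M : ℕ} (hA : #A = M)
    (hsub : ∀ T : Finset (Fin K), #T = M - 1 → ∀ U ⊆ T, U.Nonempty →
      ∀ τ τ' : Fin K → ZMod L, Hcorr s U τ = Hcorr s U τ')
    (τ τ' : Fin K → ZMod L) {T : Finset (Fin K)} (hT : T ⊂ A) : Hcorr s T τ = Hcorr s T τ' := by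
  rcases T.eq_empty_or_nonempty with rfl | hne
  · rfl
  · have hlt : #T < #A := card_lt_card hT
    obtain ⟨T', hTT', -, hcard⟩ := exists_subsuperset_card_eq hT.subset
      (n := M - 1) (by omega) (by omega)
    exact hsub T' hcard T hTT' hne τ τ'

end ActiveSet

theorem stmt12_general {K L γ M : ℕ} [NeZero L] {s : Fin K → ZMod L → ℕ}
    (hbin : ∀ i t, s i t = 0 ∨ s i t = 1) (hγ : 1 ≤ γ) {A : Finset (Fin K)} (hA : #A = M)
    (hM : 2 ≤ M) {i : Fin K} (hi : i ∈ A) (hTI : ∀ ρ ρ', R s γ i ρ = R s γ i ρ')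
    {τ τ' : Fin K → ZMod L} (hH : ∀ T ⊂ A, Hcorr s T τ = Hcorr s T τ')
    (τs : Fin K → ZMod L) :
    ((thetaZ s A M τ' : ℤ) - (thetaZ s A M τ : ℤ)) *
      ∑ k ∈ Icc 1 (M - 1), (-1) ^ (M - k) * (Nat.choose (M - 2) (k - 1) : ℤ) *
        (thetaZ s Aᶜ ((γ : ℤ) - k) τs : ℤ) = 0 := by
  subst hA
  rw [thetaZ_card_eq_hcorr hbin, thetaZ_card_eq_hcorr hbin, ← fwdDiff_iter_lightCount hM]
  exact hcorr_sub_mul_fwdDiff_eq_zero hbin hγ hi hTI hH τs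

theorem stmt12 (K L γ M : ℕ) (hK : 3 ≤ K) (hL : 1 ≤ L) [NeZero L]
    (s : Fin K → ZMod L → ℕ) (hbin : ∀ i t, s i t = 0 ∨ s i t = 1)
    (hγ1 : 1 ≤ γ) (hγK : γ < K) (hM2 : 2 ≤ M) (hMK : M < K)
    (hTI : IsTI s γ)
    (hsub : ∀ T : Finset (Fin K), T.card = M - 1 →
      ∀ A ⊆ T, A.Nonempty →
        ∀ τ τ' : Fin K → ZMod L, Hcorr s A τ = Hcorr s A τ') :
    ∀ τ τ' τs : Fin K → ZMod L,
      ((thetaZ s (Finset.univ.filter (fun j : Fin K => (j : ℕ) < M)) (M : ℤ) τ' : ℤ)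
          - (thetaZ s (Finset.univ.filter (fun j : Fin K => (j : ℕ) < M)) (M : ℤ) τ : ℤ)) *
        ∑ i ∈ Finset.Icc 1 (M - 1),
          (-1) ^ (M - i) * (Nat.choose (M - 2) (i - 1) : ℤ) *
            (thetaZ s (Finset.univ.filter (fun j : Fin K => M ≤ (j : ℕ)))
              ((γ : ℤ) - (i : ℤ)) τs : ℤ) = 0 := by
  intro τ τ' τs
  have hA : #{j : Fin K | (j : ℕ) < M} = M := by
    rw [Fin.card_filter_val_lt, min_eq_right hMK.le]
  have hB : ({j | M ≤ (j : ℕ)} : Finset (Fin K)) = ({j | (j : ℕ) < M} : Finset (Fin K))ᶜ := by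
    simp only [compl_filter, not_lt]
  have h0 : (⟨0, by omega⟩ : Fin K) ∈ ({j | (j : ℕ) < M} : Finset (Fin K)) := by
    simp only [mem_filter_univ]
    omega
  rw [hB]
  exact stmt12_general hbin hγ1 hA hM2 h0 (hTI _)
    (fun T => hcorr_eq_of_ssubset hA hsub τ τ') τs
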